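/- arXiv:2009.01999 — 3 statements merged into one kernel-verified Lean document; each statement's English description precedes it below -/
import Mathlib

section
/- Let 0<m<L, Γ_j = [(2j−2)L+m, 2jL−m] for j∈ℤ, and let u(ρ,z) = lim_{n→∞} ( Σ_{j=−n}^{n} U_{Γ_j}(ρ,z) + 2(1 − m/L) log n ) be the renormalized potential of the string of black rings. Then u is periodic in z with period 2L: u(ρ, z+2L) = u(ρ,z) for all ρ>0 and z∈ℝ. -/
open Filter Topology

/-- Interval potential of the segment `[a,b]` on the `z`-axis. -/
noncomputable def intervalPotential (a b ρ z : ℝ) : ℝ :=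
  Real.log (Real.sqrt (ρ ^ 2 + (z - a) ^ 2) - (z - a)) -
    Real.log (Real.sqrt (ρ ^ 2 + (z - b) ^ 2) - (z - b))

/-!
Moving the observation point up by one period moves every rod down by one index, so the `n`-th
symmetric partial sums at `z + p` and at `z` differ only by two boundary terms, while the
renormalizing constants cancel. The boundary terms are the potentials of rods whose distance to
the observation point tends to infinity. They tend to `0`: for `ρ > 0` the interval potential is a
difference of values of `arsinh` at two points a fixed distance apart, and
`arsinh x = log x + log 2 + o(1)`.
-/

theorem tendsto_arsinh_sub_log_atTop :
    Tendsto (fun x : ℝ => Real.arsinh x - Real.log x) atTop (𝓝 (Real.log 2)) := by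
  have h_inner : Tendsto (fun x : ℝ => 1 + √(x⁻¹ ^ 2 + 1)) atTop (𝓝 2) := by
    simpa [one_add_one_eq_two] using
      (((tendsto_inv_atTop_zero (𝕜 := ℝ)).pow 2).add_const 1).sqrt.const_add 1
  refine (h_inner.log two_ne_zero).congr' ?_
  filter_upwards [eventually_gt_atTop 0] with x hx
  have h_sqrt : √(1 + x ^ 2) = x * √(x⁻¹ ^ 2 + 1) := by
    rw [← Real.sqrt_sq hx.le, ← Real.sqrt_mul (sq_nonneg x), Real.sqrt_sq hx.le]
    congr 1
    field_simp
  have h_pos : 0 < 1 + √(x⁻¹ ^ 2 + 1) := by positivity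
  rw [Real.arsinh, h_sqrt, ← mul_one_add, Real.log_mul hx.ne' h_pos.ne', add_sub_cancel_left]

theorem tendsto_arsinh_comp_add_sub_arsinh_atTop (c : ℝ) :
    Tendsto (fun x : ℝ => Real.arsinh (x + c) - Real.arsinh x) atTop (𝓝 0) := by
  have h_shift :=
    tendsto_arsinh_sub_log_atTop.comp (tendsto_atTop_add_const_right atTop c tendsto_id)
  have h_sum := (h_shift.sub tendsto_arsinh_sub_log_atTop).add (Real.tendsto_log_comp_add_sub_log c)
  rw [sub_self, add_zero] at h_sum
  refine h_sum.congr fun x => ?_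
  simp only [Function.comp_apply, id_eq]
  ring

theorem tendsto_arsinh_comp_add_sub_arsinh_cobounded (c : ℝ) :
    Tendsto (fun x : ℝ => Real.arsinh (x + c) - Real.arsinh x)
      (Bornology.cobounded ℝ) (𝓝 0) := by
  rw [IsOrderBornology.cobounded_eq]
  refine Tendsto.sup ?_ (tendsto_arsinh_comp_add_sub_arsinh_atTop c)
  have h_neg := (tendsto_arsinh_comp_add_sub_arsinh_atTop (-c)).comp tendsto_neg_atBot_atTop
  rw [← neg_zero]
  refine h_neg.neg.congr fun x => ?_
  rw [Function.comp_apply, ← neg_add, Real.arsinh_neg, Real.arsinh_neg]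
  ring

theorem log_sqrt_sq_add_sq_sub {ρ : ℝ} (hρ : 0 < ρ) (w : ℝ) :
    Real.log (√(ρ ^ 2 + w ^ 2) - w) = Real.log ρ - Real.arsinh (w / ρ) := by
  have h_sqrt : √(ρ ^ 2 + w ^ 2) = ρ * √(1 + (w / ρ) ^ 2) := by
    rw [← Real.sqrt_sq hρ.le, ← Real.sqrt_mul (sq_nonneg ρ), Real.sqrt_sq hρ.le]
    congr 1
    field_simp
  have h_exp : √(ρ ^ 2 + w ^ 2) - w = ρ * Real.exp (Real.arsinh (-(w / ρ))) := by
    rw [Real.exp_arsinh, neg_sq, h_sqrt, mul_add, mul_neg, mul_div_cancel₀ w hρ.ne']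
    ring
  rw [h_exp, Real.log_mul hρ.ne' (Real.exp_ne_zero _), Real.log_exp, Real.arsinh_neg,
    sub_eq_add_neg]

theorem intervalPotential_eq_arsinh_sub_arsinh {ρ : ℝ} (hρ : 0 < ρ) (a b z : ℝ) :
    intervalPotential a b ρ z = Real.arsinh ((z - b) / ρ) - Real.arsinh ((z - a) / ρ) := by
  rw [intervalPotential, log_sqrt_sq_add_sq_sub hρ, log_sqrt_sq_add_sq_sub hρ,
    sub_sub_sub_cancel_left]

theorem intervalPotential_add_add (a b t ρ z : ℝ) :
    intervalPotential (a + t) (b + t) ρ z = intervalPotential a b ρ (z - t) := by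
  simp only [intervalPotential, sub_add_eq_sub_sub_swap]

theorem tendsto_intervalPotential_cobounded {ρ : ℝ} (hρ : 0 < ρ) (a b : ℝ) :
    Tendsto (intervalPotential a b ρ) (Bornology.cobounded ℝ) (𝓝 0) := by
  have h_scale : Tendsto (fun z : ℝ => (z - a) * ρ⁻¹)
      (Bornology.cobounded ℝ) (Bornology.cobounded ℝ) :=
    (tendsto_mul_right_cobounded (inv_ne_zero hρ.ne')).comp (tendsto_sub_const_cobounded a)
  refine ((tendsto_arsinh_comp_add_sub_arsinh_cobounded ((a - b) / ρ)).comp h_scale).congr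
    fun z => ?_
  rw [intervalPotential_eq_arsinh_sub_arsinh hρ, Function.comp_apply, ← div_eq_mul_inv,
    ← add_div, sub_add_sub_cancel]

theorem tendsto_intervalPotential_add_int_mul_cofinite {ρ p : ℝ} (hρ : 0 < ρ) (hp : p ≠ 0)
    (a b z : ℝ) :
    Tendsto (fun j : ℤ => intervalPotential (a + j * p) (b + j * p) ρ z) cofinite (𝓝 0) := by
  simp only [intervalPotential_add_add]
  rw [Int.cofinite_eq]
  exact (tendsto_intervalPotential_cobounded hρ a b).comp <|
    (tendsto_const_sub_cobounded z).comp <|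
      (tendsto_mul_right_cobounded hp).comp tendsto_intCast_atBot_sup_atTop_cobounded

theorem sum_Icc_comp_sub_one_sub_sum_Icc {M : Type*} [AddCommGroup M] (f : ℤ → M) {a b : ℤ}
    (hab : a ≤ b + 1) :
    ∑ j ∈ Finset.Icc a b, f (j - 1) - ∑ j ∈ Finset.Icc a b, f j = f (a - 1) - f b := by
  have h_shift : ∑ j ∈ Finset.Icc a b, f (j - 1) = ∑ j ∈ Finset.Ico (a - 1) b, f j :=
    Finset.sum_equiv (Equiv.subRight 1) (by simp) (by simp)
  have h_left : ∑ j ∈ Finset.Icc (a - 1) b, f j = f (a - 1) + ∑ j ∈ Finset.Icc a b, f j := by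
    rw [← Finset.insert_Icc_add_one_left_eq_Icc (by lia), sub_add_cancel,
      Finset.sum_insert (by simp)]
  have h_right : ∑ j ∈ Finset.Icc (a - 1) b, f j = ∑ j ∈ Finset.Ico (a - 1) b, f j + f b :=
    Finset.sum_Icc_eq_sum_Ico_add f (by lia)
  rw [h_shift, sub_eq_sub_iff_add_eq_add, ← h_right, h_left]

theorem tendsto_sum_Icc_comp_sub_one_sub_sum_Icc {M : Type*} [AddCommGroup M]
    [TopologicalSpace M] [ContinuousSub M] {f : ℤ → M} (hf : Tendsto f cofinite (𝓝 0)) :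
    Tendsto (fun n : ℕ => ∑ j ∈ Finset.Icc (-(n : ℤ)) n, f (j - 1) -
      ∑ j ∈ Finset.Icc (-(n : ℤ)) n, f j) atTop (𝓝 0) := by
  rw [Int.cofinite_eq, tendsto_sup] at hf
  have h_bot : Tendsto (fun n : ℕ => -(n : ℤ) - 1) atTop atBot :=
    tendsto_atBot_add_const_right _ (-1) (tendsto_neg_atTop_atBot.comp tendsto_natCast_atTop_atTop)
  have h_ends := (hf.1.comp h_bot).sub (hf.2.comp tendsto_natCast_atTop_atTop)
  rw [sub_zero] at h_ends
  exact h_ends.congr fun n => (sum_Icc_comp_sub_one_sub_sum_Icc f (by lia)).symm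

theorem blackRings_potential_periodic_general {ρ : ℝ} (hρ : 0 < ρ) (a b p : ℝ) (c : ℕ → ℝ)
    (u : ℝ → ℝ)
    (hu : ∀ z : ℝ, Tendsto
      (fun n : ℕ =>
        (∑ j ∈ Finset.Icc (-(n : ℤ)) (n : ℤ),
          intervalPotential (a + j * p) (b + j * p) ρ z) + c n)
      atTop (𝓝 (u z))) :
    Function.Periodic u p := by
  intro z
  rcases eq_or_ne p 0 with rfl | hp
  · rw [add_zero]
  have h_shift (j : ℤ) : intervalPotential (a + j * p) (b + j * p) ρ (z + p) =
      intervalPotential (a + (j - 1 : ℤ) * p) (b + (j - 1 : ℤ) * p) ρ z := by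
    rw [intervalPotential_add_add, intervalPotential_add_add]
    congr 1
    push_cast
    ring
  have h_diff := (hu (z + p)).sub (hu z)
  simp only [add_sub_add_right_eq_sub, h_shift] at h_diff
  have h_zero := tendsto_sum_Icc_comp_sub_one_sub_sum_Icc
    (tendsto_intervalPotential_add_int_mul_cofinite hρ hp a b z)
  exact sub_eq_zero.1 (tendsto_nhds_unique h_diff h_zero)

/-- The renormalized black-ring potential `u` is `2L`-periodic in `z`. -/
theorem blackRings_potential_periodic (L m : ℝ) (hm : 0 < m) (hmL : m < L)
    (u : ℝ → ℝ → ℝ)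
    (hu : ∀ ρ z : ℝ, 0 < ρ → Tendsto
      (fun n : ℕ =>
        (∑ j ∈ Finset.Icc (-(n : ℤ)) (n : ℤ),
          intervalPotential ((2 * (j : ℝ) - 2) * L + m) (2 * (j : ℝ) * L - m) ρ z)
          + 2 * (1 - m / L) * Real.log n)
      atTop (𝓝 (u ρ z))) :
    ∀ ρ z : ℝ, 0 < ρ → u ρ (z + 2 * L) = u ρ z := by
  intro ρ z hρ
  refine blackRings_potential_periodic_general hρ (m - 2 * L) (-m) (2 * L)
    (fun n => 2 * (1 - m / L) * Real.log n) (u ρ) (fun z => ?_) z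
  convert hu ρ z hρ using 5 <;> ring
end

section
/- Let L>0 and for each integer j let Γ_{2j} = [2jL, (2j+1)L]. Then for every (ρ,z) with ρ>0, the renormalized sequence S_n(ρ,z) = Σ_{j=−n}^{n} U_{Γ_{2j}}(ρ,z) + log n (n ≥ 1) converges to a finite limit u(ρ,z) as n → ∞. -/
open Filter Topology

/-!
The interval potential of `[a, b]` is minus the integral of `1 / D(s)` over `s ∈ [a, b]`, where
`D(s)` is the distance from `(ρ, z)` to the point `s` of the axis. For a segment of fixed width `w`
far out on the axis, `D(s) = |a| + O(1)`, so the potential is `-w / |a| + O(1 / a²)`.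
For rods placed at the multiples of a period `p`, the error terms are summable, while
the leading terms add up to `-2w / |p|` times a harmonic number, whose logarithmic divergence is
exactly what the renormalization cancels.
-/

section Distance

variable {ρ : ℝ}

lemma sqrt_sq_add_sq_pos (hρ : ρ ≠ 0) (x : ℝ) : 0 < √(ρ ^ 2 + x ^ 2) :=
  Real.sqrt_pos.2 (by positivity)

lemma abs_lt_sqrt_sq_add_sq (hρ : ρ ≠ 0) (x : ℝ) : |x| < √(ρ ^ 2 + x ^ 2) := by
  refine Real.lt_sqrt_of_sq_lt ?_
  rw [sq_abs]
  exact lt_add_of_pos_left _ (by positivity)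

lemma abs_sqrt_sq_add_sq_sub_abs_le (ρ x : ℝ) : |(√(ρ ^ 2 + x ^ 2) - |x|)| ≤ |ρ| := by
  have lower : |x| ≤ √(ρ ^ 2 + x ^ 2) := Real.abs_le_sqrt (le_add_of_nonneg_left (sq_nonneg ρ))
  have upper : √(ρ ^ 2 + x ^ 2) ≤ |ρ| + |x| := by
    refine Real.sqrt_le_iff.2 ⟨by positivity, ?_⟩
    rw [← sq_abs ρ, ← sq_abs x]
    nlinarith [abs_nonneg ρ, abs_nonneg x]
  rw [abs_of_nonneg (sub_nonneg.2 lower)]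
  linarith

lemma abs_sqrt_sq_add_sub_sq_sub_abs_le (ρ z s a : ℝ) :
    |(√(ρ ^ 2 + (z - s) ^ 2) - |a|)| ≤ |ρ| + |z| + |s - a| :=
  calc |(√(ρ ^ 2 + (z - s) ^ 2) - |a|)|
      ≤ |(√(ρ ^ 2 + (z - s) ^ 2) - |z - s|)| + |(|z - s| - |a|)| := abs_sub_le _ _ _
    _ ≤ |ρ| + |(z - s) - -a| := by
        refine add_le_add (abs_sqrt_sq_add_sq_sub_abs_le ρ (z - s)) ?_
        rw [← abs_neg a]
        exact abs_abs_sub_abs_le (z - s) (-a)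
    _ = |ρ| + |z - (s - a)| := by rw [sub_neg_eq_add, sub_add]
    _ ≤ |ρ| + |z| + |s - a| := by linarith [abs_sub z (s - a)]

lemma abs_inv_sqrt_sub_inv_abs_le {z s a C : ℝ} (ha : a ≠ 0)
    (hC : |ρ| + |z| + |s - a| ≤ C) (hCa : 2 * C ≤ |a|) :
    |(√(ρ ^ 2 + (z - s) ^ 2))⁻¹ - |a|⁻¹| ≤ 2 * C / a ^ 2 := by
  have hdist := (abs_sqrt_sq_add_sub_sq_sub_abs_le ρ z s a).trans hC
  have ha_pos : 0 < |a| := abs_pos.2 ha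
  set D := √(ρ ^ 2 + (z - s) ^ 2)
  have hD : |a| / 2 ≤ D := by linarith [(abs_le.1 hdist).1]
  have hD_pos : 0 < D := by linarith
  calc |D⁻¹ - |a|⁻¹| = |(D - |a|)| / (D * |a|) := by
        rw [inv_sub_inv hD_pos.ne' ha_pos.ne', abs_div, abs_sub_comm,
          abs_of_pos (mul_pos hD_pos ha_pos)]
    _ ≤ C / (|a| / 2 * |a|) := by gcongr; exact (abs_nonneg _).trans hdist
    _ = 2 * C / a ^ 2 := by rw [← sq_abs a]; field_simp

end Distance

section IntervalPotential

variable {ρ : ℝ}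

lemma hasDerivAt_log_sqrt_sq_add_sq_sub (hρ : ρ ≠ 0) (x : ℝ) :
    HasDerivAt (fun x ↦ Real.log (√(ρ ^ 2 + x ^ 2) - x)) (-(√(ρ ^ 2 + x ^ 2))⁻¹) x := by
  have hD : √(ρ ^ 2 + x ^ 2) ≠ 0 := (sqrt_sq_add_sq_pos hρ x).ne'
  have hDx : √(ρ ^ 2 + x ^ 2) - x ≠ 0 :=
    (sub_pos.2 ((le_abs_self x).trans_lt (abs_lt_sqrt_sq_add_sq hρ x))).ne'
  have hsqrt : HasDerivAt (fun x ↦ √(ρ ^ 2 + x ^ 2)) (x / √(ρ ^ 2 + x ^ 2)) x := by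
    convert! ((hasDerivAt_pow 2 x).const_add (ρ ^ 2)).sqrt (by positivity) using 1
    field_simp
    ring
  convert! (hsqrt.sub (hasDerivAt_id x)).log hDx using 1
  simp only [Pi.sub_apply, id]
  field_simp
  ring

lemma continuous_inv_sqrt_sq_add_sub_sq (hρ : ρ ≠ 0) (z : ℝ) :
    Continuous fun s ↦ (√(ρ ^ 2 + (z - s) ^ 2))⁻¹ :=
  Continuous.inv₀ (by fun_prop) fun s ↦ (sqrt_sq_add_sq_pos hρ (z - s)).ne'

lemma intervalPotential_eq_neg_integral (hρ : ρ ≠ 0) (a b z : ℝ) :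
    intervalPotential a b ρ z = -∫ s in a..b, (√(ρ ^ 2 + (z - s) ^ 2))⁻¹ := by
  have hderiv (s : ℝ) : HasDerivAt (fun s ↦ Real.log (√(ρ ^ 2 + (z - s) ^ 2) - (z - s)))
      (√(ρ ^ 2 + (z - s) ^ 2))⁻¹ s := by
    simpa using (hasDerivAt_log_sqrt_sq_add_sq_sub hρ (z - s)).comp_const_sub z s
  rw [intervalIntegral.integral_eq_sub_of_hasDerivAt (fun s _ ↦ hderiv s)
    ((continuous_inv_sqrt_sq_add_sub_sq hρ z).intervalIntegrable a b), neg_sub]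
  rfl

lemma abs_intervalPotential_add_div_abs_le (hρ : ρ ≠ 0) {a b z : ℝ} (ha : a ≠ 0)
    (hfar : 2 * (|ρ| + |z| + |b - a|) ≤ |a|) :
    |(intervalPotential a b ρ z + (b - a) / |a|)|
      ≤ 2 * (|ρ| + |z| + |b - a|) / a ^ 2 * |b - a| := by
  have hdiff : intervalPotential a b ρ z + (b - a) / |a|
      = -∫ s in a..b, ((√(ρ ^ 2 + (z - s) ^ 2))⁻¹ - |a|⁻¹) := by
    rw [intervalIntegral.integral_sub
      ((continuous_inv_sqrt_sq_add_sub_sq hρ z).intervalIntegrable a b)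
      intervalIntegrable_const, intervalIntegral.integral_const,
      intervalPotential_eq_neg_integral hρ, smul_eq_mul, div_eq_mul_inv]
    ring
  rw [hdiff, abs_neg]
  refine intervalIntegral.norm_integral_le_of_norm_le_const (E := ℝ) fun s hs ↦ ?_
  have hsa : |s - a| ≤ |b - a| := Set.abs_sub_left_of_mem_uIcc (Set.uIoc_subset_uIcc hs)
  exact abs_inv_sqrt_sub_inv_abs_le ha (by gcongr) hfar

lemma intervalPotential_add_div_abs_isBigO (hρ : ρ ≠ 0) (w z : ℝ) :
    (fun a ↦ intervalPotential a (a + w) ρ z + w / |a|)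
      =O[Bornology.cobounded ℝ] fun a ↦ (a ^ 2)⁻¹ := by
  refine Asymptotics.IsBigO.of_bound (2 * (|ρ| + |z| + |w|) * |w|) ?_
  filter_upwards [tendsto_norm_cobounded_atTop.eventually_ge_atTop (2 * (|ρ| + |z| + |w|)),
    Bornology.eventually_ne_cobounded 0] with a hfar ha
  have hbound := abs_intervalPotential_add_div_abs_le hρ (b := a + w) (z := z) ha
    (by rwa [add_sub_cancel_left])
  rw [add_sub_cancel_left] at hbound
  rw [Real.norm_eq_abs, Real.norm_of_nonneg (by positivity)]
  exact hbound.trans_eq (by ring)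

lemma summable_intervalPotential_add_div_abs (hρ : ρ ≠ 0) {p : ℝ} (hp : p ≠ 0) (w z : ℝ) :
    Summable fun j : ℤ ↦ intervalPotential (j * p) (j * p + w) ρ z + w / |p| / |(j : ℝ)| := by
  have hcobounded : Tendsto (fun j : ℤ ↦ (j : ℝ) * p) cofinite (Bornology.cobounded ℝ) := by
    refine (tendsto_mul_right_cobounded hp).comp ?_
    rw [Metric.cobounded_eq_cocompact]
    exact Int.tendsto_coe_cofinite
  have hsq : Summable fun j : ℤ ↦ (((j : ℝ) * p) ^ 2)⁻¹ := by
    simpa only [mul_pow, mul_inv, one_div] using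
      (Real.summable_one_div_int_pow.2 one_lt_two).mul_right (p ^ 2)⁻¹
  refine (summable_of_isBigO hsq
    ((intervalPotential_add_div_abs_isBigO hρ w z).comp_tendsto hcobounded)).congr fun j ↦ ?_
  rw [Function.comp_apply, abs_mul, mul_comm |(j : ℝ)|, div_div]

end IntervalPotential

section Renormalization

-- The term `j = 0` is `0⁻¹ = 0`.
lemma sum_Icc_neg_inv_abs (n : ℕ) :
    ∑ j ∈ Finset.Icc (-n : ℤ) n, |(j : ℝ)|⁻¹ = 2 * harmonic n := by
  have heven : Function.Even fun j : ℤ ↦ |(j : ℝ)|⁻¹ := fun j ↦ by simp only [Int.cast_neg, abs_neg]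
  rw [Finset.sum_Icc_of_even_eq_range heven, Finset.sum_range_succ', harmonic]
  have habs (k : ℕ) : |(k : ℝ) + 1| = k + 1 := abs_of_pos k.cast_add_one_pos
  simp [habs]

lemma tendsto_sum_Icc_add_log_of_hasSum {f : ℤ → ℝ} {c S : ℝ}
    (hf : HasSum (fun j ↦ f j + c / |(j : ℝ)|) S) :
    Tendsto (fun n : ℕ ↦ (∑ j ∈ Finset.Icc (-n : ℤ) n, f j) + 2 * c * Real.log n) atTop
      (𝓝 (S - 2 * c * Real.eulerMascheroniConstant)) := by
  have hsymm := SummationFilter.hasSum_symmetricIcc_iff.1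
    (hf.mono_left (SummationFilter.symmetricIcc ℤ).le_atTop)
  refine (hsymm.sub (Real.tendsto_harmonic_sub_log.const_mul (2 * c))).congr fun n ↦ ?_
  simp only [Finset.sum_add_distrib, div_eq_mul_inv, ← Finset.mul_sum, sum_Icc_neg_inv_abs]
  ring

end Renormalization

theorem soliton_renormalized_sum_converges_general {p ρ : ℝ} (hp : p ≠ 0) (hρ : ρ ≠ 0)
    (w z : ℝ) :
    ∃ u : ℝ, Tendsto
      (fun n : ℕ ↦ (∑ j ∈ Finset.Icc (-n : ℤ) n, intervalPotential (j * p) (j * p + w) ρ z)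
        + 2 * (w / |p|) * Real.log n)
      atTop (𝓝 u) :=
  ⟨_, tendsto_sum_Icc_add_log_of_hasSum
    (summable_intervalPotential_add_div_abs hρ hp w z).hasSum⟩

/-- Convergence of the renormalized sum of rod potentials for the soliton (string of
corners): the rods are `Γ_{2j} = [2jL, (2j+1)L]` and the renormalization term is `log n`. -/
theorem soliton_renormalized_sum_converges (L : ℝ) (hL : 0 < L) (ρ z : ℝ) (hρ : 0 < ρ) :
    ∃ u : ℝ, Tendsto
      (fun n : ℕ =>
        (∑ j ∈ Finset.Icc (-(n : ℤ)) (n : ℤ),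
          intervalPotential (2 * (j : ℝ) * L) ((2 * (j : ℝ) + 1) * L) ρ z)
          + Real.log n)
      atTop (𝓝 u) := by
  have hcoeff : 2 * (L / |2 * L|) = 1 := by
    rw [abs_of_pos (by positivity)]
    field_simp
  have hleft (j : ℤ) : (j : ℝ) * (2 * L) = 2 * j * L := by ring
  have hright (j : ℤ) : 2 * (j : ℝ) * L + L = (2 * j + 1) * L := by ring
  simpa only [hcoeff, one_mul, hleft, hright] using
    soliton_renormalized_sum_converges_general (p := 2 * L) (by positivity) hρ.ne' L z
end

section
/- Let L>0 and for each integer j let Γ_{2j} = [2jL,(2j+1)L]. Then the renormalized sequence S_n(ρ,z) = Σ_{j=−n}^{n} U_{Γ_{2j}}(ρ,z) + log n converges locally uniformly on the open half-plane H = {(ρ,z) : ρ>0}, and the limit function u satisfies the axisymmetric Laplace equation ∂²_ρ u + ρ^{-1} ∂_ρ u + ∂²_z u = 0 on H. -/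
open Filter Topology

/-!
The `z`-derivative of `log (√(ρ² + x²) - x)` is `-1 / √(ρ² + x²)`, so by the mean value theorem
the potential of a segment of length `L` near the axial point `2jL` is `-L / |2jL| + O(1 / j²)`,
and its first and second derivatives are `O(1 / j²)`, locally uniformly on the half-plane. Adding
`1 / (2|j|)` to the `j`-th term therefore makes the series normally convergent. The added constants
sum to the harmonic number `Hₙ`, and `Hₙ - log n → γ`. The Laplace equation holds term by term;
it is summed in the flux form `∂_ρ (ρ ∂_ρ u) = -ρ ∂_z² u`.
-/

section Preliminaries

theorem abs_sub_le_of_abs_hasDerivAt_le {f f' : ℝ → ℝ} {x y C : ℝ} (hxy : x ≤ y)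
    (hf : ∀ t ∈ Set.Icc x y, HasDerivAt f (f' t) t) (hC : ∀ t ∈ Set.Icc x y, |f' t| ≤ C) :
    |f y - f x| ≤ C * (y - x) := by
  simpa only [Real.norm_eq_abs, abs_of_nonneg (sub_nonneg.2 hxy)] using
    (convex_Icc x y).norm_image_sub_le_of_norm_hasDerivWithin_le
      (fun t ht => (hf t ht).hasDerivWithinAt) hC
      (Set.left_mem_Icc.2 hxy) (Set.right_mem_Icc.2 hxy)

theorem exists_forall_norm_fst_snd_le_of_isBounded {E F : Type*} [SeminormedAddCommGroup E]
    [SeminormedAddCommGroup F] {s : Set (E × F)} (hs : Bornology.IsBounded s) :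
    ∃ R, ∀ p ∈ s, ‖p.1‖ ≤ R ∧ ‖p.2‖ ≤ R := by
  obtain ⟨R, hR⟩ := hs.exists_norm_le
  exact ⟨R, fun p hp => ⟨(norm_fst_le p).trans (hR p hp), (norm_snd_le p).trans (hR p hp)⟩⟩

theorem hasDerivAt_tsum_of_summableLocallyUniformlyOn {ι 𝕜 F : Type*} [RCLike 𝕜]
    [NormedAddCommGroup F] [NormedSpace 𝕜 F] {g g' : ι → 𝕜 → F} {s : Set 𝕜} (hs : IsOpen s)
    (hg : ∀ i, ∀ y ∈ s, HasDerivAt (g i) (g' i y) y) (hsum : ∀ y ∈ s, Summable fun i => g i y)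
    (hg' : SummableLocallyUniformlyOn g' s) {x : 𝕜} (hx : x ∈ s) :
    HasDerivAt (fun y => ∑' i, g i y) (∑' i, g' i x) x :=
  hasDerivAt_of_tendstoLocallyUniformlyOn hs hg'.hasSumLocallyUniformlyOn
    (.of_forall fun _ y hy => .fun_sum fun i _ => hg i y hy) (fun y hy => (hsum y hy).hasSum) hx

theorem summableLocallyUniformlyOn_of_eventually_norm_le_div_sq {X F : Type*} [TopologicalSpace X]
    [LocallyCompactSpace X] [NormedAddCommGroup F] [CompleteSpace F] {f : ℤ → X → F} {s : Set X}
    (hs : IsOpen s)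
    (hf : ∀ K ⊆ s, IsCompact K →
      ∃ C : ℝ, ∀ᶠ j : ℤ in cofinite, ∀ x ∈ K, ‖f j x‖ ≤ C / (j : ℝ) ^ 2) :
    SummableLocallyUniformlyOn f s := by
  refine .of_locally_bounded_eventually hs fun K hKs hK => ?_
  obtain ⟨C, hC⟩ := hf K hKs hK
  refine ⟨fun j => C / (j : ℝ) ^ 2, ?_, hC⟩
  simpa only [mul_one_div] using (Real.summable_one_div_int_pow.2 one_lt_two).mul_left C

theorem sum_Icc_one_div_two_mul_abs (n : ℕ) :
    ∑ j ∈ Finset.Icc (-(n : ℤ)) n, 1 / (2 * |(j : ℝ)|) = harmonic n := by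
  induction n with
  | zero => simp
  | succ n ih =>
    have hn : |(n : ℝ) + 1| = n + 1 := abs_of_nonneg (by positivity)
    have hn' : |-1 + -(n : ℝ)| = n + 1 := by rw [← neg_add, abs_neg, add_comm, hn]
    rw [Nat.cast_succ, Finset.sum_Icc_succ_eq_add_endpoints, ih, harmonic_succ]
    push_cast
    rw [neg_add_rev, hn, hn']
    field_simp
    ring

end Preliminaries

section AxisDist

/-- Distance from the origin of the axis to the point at distance `ρ` from the axis and
height `x`. -/
noncomputable def axisDist (ρ x : ℝ) : ℝ := √(ρ ^ 2 + x ^ 2)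

theorem axisDist_eq_norm (ρ x : ℝ) : axisDist ρ x = ‖(⟨ρ, x⟩ : ℂ)‖ :=
  (Complex.norm_eq_sqrt_sq_add_sq ⟨ρ, x⟩).symm

theorem axisDist_sq (ρ x : ℝ) : axisDist ρ x ^ 2 = ρ ^ 2 + x ^ 2 :=
  Real.sq_sqrt (by positivity)

theorem le_axisDist (ρ x : ℝ) : ρ ≤ axisDist ρ x :=
  axisDist_eq_norm ρ x ▸ Complex.re_le_norm ⟨ρ, x⟩

theorem abs_le_axisDist (ρ x : ℝ) : |x| ≤ axisDist ρ x :=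
  axisDist_eq_norm ρ x ▸ Complex.abs_im_le_norm ⟨ρ, x⟩

theorem axisDist_le_abs_add_abs (ρ x : ℝ) : axisDist ρ x ≤ |ρ| + |x| :=
  axisDist_eq_norm ρ x ▸ Complex.norm_le_abs_re_add_abs_im ⟨ρ, x⟩

theorem abs_axisDist_sub_abs_le (ρ x a : ℝ) : |axisDist ρ x - (|a|)| ≤ |ρ| + |x + a| := by
  have hle := axisDist_le_abs_add_abs ρ x
  have hge := abs_le_axisDist ρ x
  have hxa : |(|x| - |a|)| ≤ |x + a| := by
    simpa only [abs_neg, sub_neg_eq_add] using abs_abs_sub_abs_le_abs_sub x (-a)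
  rw [abs_le] at hxa ⊢
  constructor <;> linarith [abs_nonneg ρ]

variable {ρ : ℝ}

theorem axisDist_pos (hρ : 0 < ρ) (x : ℝ) : 0 < axisDist ρ x :=
  hρ.trans_le (le_axisDist ρ x)

theorem axisDist_sub_pos (hρ : 0 < ρ) (x : ℝ) : 0 < axisDist ρ x - x :=
  sub_pos.2 <| Real.lt_sqrt_of_sq_lt <| lt_add_of_pos_left _ (pow_pos hρ 2)

theorem hasDerivAt_axisDist_axial (hρ : 0 < ρ) (x : ℝ) :
    HasDerivAt (axisDist ρ) (x / axisDist ρ x) x := by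
  have h : HasDerivAt (fun y => ρ ^ 2 + y ^ 2) (2 * x) x := by
    simpa using (hasDerivAt_pow 2 x).const_add (ρ ^ 2)
  exact (h.sqrt (by positivity)).congr_deriv (mul_div_mul_left _ _ two_ne_zero)

theorem hasDerivAt_axisDist_radial (hρ : 0 < ρ) (x : ℝ) :
    HasDerivAt (fun s => axisDist s x) (ρ / axisDist ρ x) ρ := by
  have h : HasDerivAt (fun s => s ^ 2 + x ^ 2) (2 * ρ) ρ := by
    simpa using (hasDerivAt_pow 2 ρ).add_const (x ^ 2)
  exact (h.sqrt (by positivity)).congr_deriv (mul_div_mul_left _ _ two_ne_zero)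

theorem hasDerivAt_inv_axisDist_axial (hρ : 0 < ρ) (x : ℝ) :
    HasDerivAt (fun y => (axisDist ρ y)⁻¹) (-(x / axisDist ρ x ^ 3)) x := by
  have hr := axisDist_pos hρ x
  refine ((hasDerivAt_axisDist_axial hρ x).fun_inv hr.ne').congr_deriv ?_
  field_simp

theorem hasDerivAt_div_axisDist_axial (hρ : 0 < ρ) (x : ℝ) :
    HasDerivAt (fun y => y / axisDist ρ y) (ρ ^ 2 / axisDist ρ x ^ 3) x := by
  have hr := axisDist_pos hρ x
  refine ((hasDerivAt_id' x).fun_div (hasDerivAt_axisDist_axial hρ x) hr.ne').congr_deriv ?_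
  field_simp
  linear_combination axisDist_sq ρ x

theorem hasDerivAt_div_axisDist_radial (hρ : 0 < ρ) (x : ℝ) :
    HasDerivAt (fun s => x / axisDist s x) (-(ρ * (x / axisDist ρ x ^ 3))) ρ := by
  have hr := axisDist_pos hρ x
  refine ((hasDerivAt_const ρ x).fun_div (hasDerivAt_axisDist_radial hρ x) hr.ne').congr_deriv ?_
  field_simp
  ring

theorem abs_div_axisDist_cube_le (hρ : 0 < ρ) (x : ℝ) :
    |x / axisDist ρ x ^ 3| ≤ 1 / axisDist ρ x ^ 2 := by
  have hr := axisDist_pos hρ x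
  rw [abs_div, abs_of_pos (pow_pos hr 3), div_le_div_iff₀ (by positivity) (by positivity), one_mul,
    pow_succ' _ 2]
  gcongr
  exact abs_le_axisDist ρ x

/-- Potential of the half-line of points of the axis above the origin. -/
noncomputable def halfLinePotential (ρ x : ℝ) : ℝ := Real.log (axisDist ρ x - x)

theorem hasDerivAt_halfLinePotential_axial (hρ : 0 < ρ) (x : ℝ) :
    HasDerivAt (halfLinePotential ρ) (-(axisDist ρ x)⁻¹) x := by
  have hr := axisDist_pos hρ x
  have hrx := axisDist_sub_pos hρ x
  refine (((hasDerivAt_axisDist_axial hρ x).fun_sub (hasDerivAt_id' x)).log hrx.ne').congr_deriv ?_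
  field_simp
  ring

theorem hasDerivAt_halfLinePotential_radial (hρ : 0 < ρ) (x : ℝ) :
    HasDerivAt (fun s => halfLinePotential s x) ((1 + x / axisDist ρ x) / ρ) ρ := by
  have hr := axisDist_pos hρ x
  have hrx := axisDist_sub_pos hρ x
  refine (((hasDerivAt_axisDist_radial hρ x).sub_const x).log hrx.ne').congr_deriv ?_
  field_simp
  linear_combination -axisDist_sq ρ x

end AxisDist

section IntervalPotential

theorem intervalPotential_eq (a b ρ z : ℝ) :
    intervalPotential a b ρ z = halfLinePotential ρ (z - a) - halfLinePotential ρ (z - b) :=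
  rfl

/-- The derivative of `intervalPotential` in `ρ`. -/
noncomputable def intervalRadialDeriv (a b ρ z : ℝ) : ℝ :=
  ((z - a) / axisDist ρ (z - a) - (z - b) / axisDist ρ (z - b)) / ρ

/-- The derivative of `intervalPotential` in `z`. -/
noncomputable def intervalAxialDeriv (a b ρ z : ℝ) : ℝ :=
  (axisDist ρ (z - b))⁻¹ - (axisDist ρ (z - a))⁻¹

/-- The second derivative of `intervalPotential` in `z`. -/
noncomputable def intervalAxialDerivTwo (a b ρ z : ℝ) : ℝ :=
  (z - a) / axisDist ρ (z - a) ^ 3 - (z - b) / axisDist ρ (z - b) ^ 3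

variable {a b ρ z m : ℝ}

theorem hasDerivAt_intervalPotential_radial (a b : ℝ) (hρ : 0 < ρ) (z : ℝ) :
    HasDerivAt (fun s => intervalPotential a b s z) (intervalRadialDeriv a b ρ z) ρ := by
  refine ((hasDerivAt_halfLinePotential_radial hρ (z - a)).fun_sub
    (hasDerivAt_halfLinePotential_radial hρ (z - b))).congr_deriv ?_
  unfold intervalRadialDeriv
  ring

theorem hasDerivAt_mul_intervalRadialDeriv (a b : ℝ) (hρ : 0 < ρ) (z : ℝ) :
    HasDerivAt (fun s => s * intervalRadialDeriv a b s z)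
      (-(ρ * intervalAxialDerivTwo a b ρ z)) ρ := by
  have h := ((hasDerivAt_div_axisDist_radial hρ (z - a)).fun_sub
    (hasDerivAt_div_axisDist_radial hρ (z - b))).congr_deriv
    (show _ = -(ρ * intervalAxialDerivTwo a b ρ z) by unfold intervalAxialDerivTwo; ring)
  refine h.congr_of_eventuallyEq ?_
  filter_upwards [lt_mem_nhds hρ] with s hs using mul_div_cancel₀ _ hs.ne'

theorem hasDerivAt_intervalPotential_axial (a b : ℝ) (hρ : 0 < ρ) (z : ℝ) :
    HasDerivAt (intervalPotential a b ρ) (intervalAxialDeriv a b ρ z) z := by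
  refine (((hasDerivAt_halfLinePotential_axial hρ (z - a)).comp_sub_const z a).fun_sub
    ((hasDerivAt_halfLinePotential_axial hρ (z - b)).comp_sub_const z b)).congr_deriv ?_
  unfold intervalAxialDeriv
  ring

theorem hasDerivAt_intervalAxialDeriv_axial (a b : ℝ) (hρ : 0 < ρ) (z : ℝ) :
    HasDerivAt (intervalAxialDeriv a b ρ) (intervalAxialDerivTwo a b ρ z) z := by
  refine (((hasDerivAt_inv_axisDist_axial hρ (z - b)).comp_sub_const z b).fun_sub
    ((hasDerivAt_inv_axisDist_axial hρ (z - a)).comp_sub_const z a)).congr_deriv ?_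
  unfold intervalAxialDerivTwo
  ring

theorem abs_intervalRadialDeriv_le (hab : a ≤ b) (hρ : 0 < ρ) (hm : 0 < m)
    (hdist : ∀ x ∈ Set.Icc (z - b) (z - a), m ≤ axisDist ρ x) :
    |intervalRadialDeriv a b ρ z| ≤ (b - a) / m ^ 2 := by
  have hbound : ∀ x ∈ Set.Icc (z - b) (z - a), |ρ ^ 2 / axisDist ρ x ^ 3| ≤ ρ / m ^ 2 := by
    intro x hx
    have hr := axisDist_pos hρ x
    calc |ρ ^ 2 / axisDist ρ x ^ 3| = ρ * ρ / (axisDist ρ x * axisDist ρ x ^ 2) := by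
          rw [abs_of_pos (by positivity), sq ρ, pow_succ' _ 2]
      _ ≤ ρ * axisDist ρ x / (axisDist ρ x * m ^ 2) := by
          gcongr
          exacts [le_axisDist ρ x, hdist x hx]
      _ = ρ / m ^ 2 := by field_simp
  have hflux := abs_sub_le_of_abs_hasDerivAt_le (sub_le_sub_left hab z)
    (fun x _ => hasDerivAt_div_axisDist_axial hρ x) hbound
  rw [intervalRadialDeriv, abs_div, abs_of_pos hρ, div_le_iff₀ hρ]
  exact hflux.trans_eq (by ring)

theorem abs_intervalAxialDeriv_le (hab : a ≤ b) (hρ : 0 < ρ) (hm : 0 < m)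
    (hdist : ∀ x ∈ Set.Icc (z - b) (z - a), m ≤ axisDist ρ x) :
    |intervalAxialDeriv a b ρ z| ≤ (b - a) / m ^ 2 := by
  have hbound : ∀ x ∈ Set.Icc (z - b) (z - a), |-(x / axisDist ρ x ^ 3)| ≤ 1 / m ^ 2 := by
    intro x hx
    rw [abs_neg]
    refine (abs_div_axisDist_cube_le hρ x).trans ?_
    gcongr
    exact hdist x hx
  have h := abs_sub_le_of_abs_hasDerivAt_le (sub_le_sub_left hab z)
    (fun x _ => hasDerivAt_inv_axisDist_axial hρ x) hbound
  rw [intervalAxialDeriv, abs_sub_comm]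
  exact h.trans_eq (by ring)

theorem abs_intervalAxialDerivTwo_le (hab : a ≤ b) (hρ : 0 < ρ) (hm : 0 < m)
    (hdist : ∀ x ∈ Set.Icc (z - b) (z - a), m ≤ axisDist ρ x) :
    |intervalAxialDerivTwo a b ρ z| ≤ 2 / m ^ 2 := by
  have hbound : ∀ x ∈ Set.Icc (z - b) (z - a), |x / axisDist ρ x ^ 3| ≤ 1 / m ^ 2 := by
    intro x hx
    refine (abs_div_axisDist_cube_le hρ x).trans ?_
    gcongr
    exact hdist x hx
  have hends := sub_le_sub_left hab z
  calc |intervalAxialDerivTwo a b ρ z| ≤ 1 / m ^ 2 + 1 / m ^ 2 :=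
        (abs_sub _ _).trans (add_le_add (hbound _ (Set.right_mem_Icc.2 hends))
          (hbound _ (Set.left_mem_Icc.2 hends)))
    _ = 2 / m ^ 2 := by ring

theorem abs_intervalPotential_add_le (hab : a ≤ b) (ha : a ≠ 0) (hρ : 0 < ρ) (hm : 0 < m)
    (hdist : ∀ x ∈ Set.Icc (z - b) (z - a), m ≤ axisDist ρ x) :
    |intervalPotential a b ρ z + (b - a) / (|a|)|
      ≤ (ρ + |z| + (b - a)) / (m * |a|) * (b - a) := by
  have ha' : 0 < |a| := abs_pos.2 ha
  have hderiv : ∀ x ∈ Set.Icc (z - b) (z - a),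
      HasDerivAt (fun y => halfLinePotential ρ y + y / |a|) (-(axisDist ρ x)⁻¹ + 1 / |a|) x :=
    fun x _ => (hasDerivAt_halfLinePotential_axial hρ x).fun_add ((hasDerivAt_id' x).div_const _)
  have hbound : ∀ x ∈ Set.Icc (z - b) (z - a),
      |-(axisDist ρ x)⁻¹ + 1 / (|a|)| ≤ (ρ + |z| + (b - a)) / (m * |a|) := by
    intro x hx
    have hr := axisDist_pos hρ x
    have hxa : |x + a| ≤ |z| + (b - a) := by
      rw [abs_le]
      constructor <;> linarith [hx.1, hx.2, neg_abs_le z, le_abs_self z]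
    have hnum : |axisDist ρ x - (|a|)| ≤ ρ + |z| + (b - a) := by
      linarith [abs_axisDist_sub_abs_le ρ x a, abs_of_pos hρ]
    calc |-(axisDist ρ x)⁻¹ + 1 / (|a|)| = |axisDist ρ x - (|a|)| / (axisDist ρ x * |a|) := by
          rw [← abs_of_pos (mul_pos hr ha'), ← abs_div]
          congr 1
          field_simp
          ring
      _ ≤ (ρ + |z| + (b - a)) / (m * |a|) := by
          gcongr
          exact hdist x hx
  have h := abs_sub_le_of_abs_hasDerivAt_le (sub_le_sub_left hab z) hderiv hbound
  rw [sub_sub_sub_cancel_left] at h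
  refine le_of_eq_of_le (congrArg _ ?_) h
  rw [intervalPotential_eq]
  ring

end IntervalPotential

section AxisymmetricLaplace

/-- The half-plane `ρ > 0`. -/
def halfPlane : Set (ℝ × ℝ) := {p | 0 < p.1}

theorem isOpen_halfPlane : IsOpen halfPlane :=
  isOpen_lt continuous_const continuous_fst

theorem hasDerivAt_tsum_radial {ι : Type*} {g g' : ι → ℝ × ℝ → ℝ}
    (hg : ∀ i ρ z, 0 < ρ → HasDerivAt (fun s => g i (s, z)) (g' i (ρ, z)) ρ)
    (hsum : ∀ p ∈ halfPlane, Summable fun i => g i p)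
    (hg' : SummableLocallyUniformlyOn g' halfPlane) (ρ z : ℝ) (hρ : 0 < ρ) :
    HasDerivAt (fun s => ∑' i, g i (s, z)) (∑' i, g' i (ρ, z)) ρ :=
  hasDerivAt_tsum_of_summableLocallyUniformlyOn isOpen_Ioi (fun i s hs => hg i s z hs)
    (fun s hs => hsum (s, z) hs)
    (hg'.comp (fun s => (s, z)) (fun _ hs => hs) (by fun_prop)) (Set.mem_Ioi.2 hρ)

theorem hasDerivAt_tsum_axial {ι : Type*} {g g' : ι → ℝ × ℝ → ℝ}
    (hg : ∀ i ρ z, 0 < ρ → HasDerivAt (fun t => g i (ρ, t)) (g' i (ρ, z)) z)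
    (hsum : ∀ p ∈ halfPlane, Summable fun i => g i p)
    (hg' : SummableLocallyUniformlyOn g' halfPlane) (ρ z : ℝ) (hρ : 0 < ρ) :
    HasDerivAt (fun t => ∑' i, g i (ρ, t)) (∑' i, g' i (ρ, z)) z :=
  hasDerivAt_tsum_of_summableLocallyUniformlyOn isOpen_univ (fun i t _ => hg i ρ t hρ)
    (fun t _ => hsum (ρ, t) hρ)
    (hg'.comp (fun t => (ρ, t)) (fun _ _ => hρ) (by fun_prop)) (Set.mem_univ z)

/-- Axisymmetric Laplace equation on the half-plane `ρ > 0`, in the coordinates `(ρ, z)`. The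
derivatives are total, so differentiability of `u` is not part of the predicate. -/
def IsAxisymmetricHarmonic (u : ℝ × ℝ → ℝ) : Prop :=
  ∀ p : ℝ × ℝ, 0 < p.1 →
    deriv (fun s => deriv (fun s' => u (s', p.2)) s) p.1
      + p.1⁻¹ * deriv (fun s => u (s, p.2)) p.1
      + deriv (fun t => deriv (fun t' => u (p.1, t')) t) p.2 = 0

theorem isAxisymmetricHarmonic_of_hasDerivAt {u A D E : ℝ × ℝ → ℝ}
    (hu_radial : ∀ ρ z, 0 < ρ → HasDerivAt (fun s => u (s, z)) (A (ρ, z)) ρ)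
    (hflux : ∀ ρ z, 0 < ρ → HasDerivAt (fun s => s * A (s, z)) (-(ρ * E (ρ, z))) ρ)
    (hu_axial : ∀ ρ z, 0 < ρ → HasDerivAt (fun t => u (ρ, t)) (D (ρ, z)) z)
    (hD_axial : ∀ ρ z, 0 < ρ → HasDerivAt (fun t => D (ρ, t)) (E (ρ, z)) z) :
    IsAxisymmetricHarmonic u := by
  rintro ⟨ρ, z⟩ (hρ : 0 < ρ)
  have hradial :
      (fun s => deriv (fun s' => u (s', z)) s) =ᶠ[𝓝 ρ] fun s => s⁻¹ * (s * A (s, z)) := by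
    filter_upwards [lt_mem_nhds hρ] with s hs
    rw [(hu_radial s z hs).deriv, inv_mul_cancel_left₀ hs.ne']
  have haxial : (fun t => deriv (fun t' => u (ρ, t')) t) = fun t => D (ρ, t) :=
    funext fun t => (hu_axial ρ t hρ).deriv
  have hradial' := (hasDerivAt_inv hρ.ne').fun_mul (hflux ρ z hρ)
  rw [hradial.deriv_eq, hradial'.deriv, haxial, (hD_axial ρ z hρ).deriv, (hu_radial ρ z hρ).deriv]
  field_simp
  ring

end AxisymmetricLaplace

section Soliton

/-- The value on the segment `Γ_{2j} = [2jL, (2j+1)L]` of a function `G a b ρ z` of segments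
`[a, b]` and points `(ρ, z)`, such as `intervalPotential` or one of its derivatives. -/
def onSegment (L : ℝ) (G : ℝ → ℝ → ℝ → ℝ → ℝ) (j : ℤ) (p : ℝ × ℝ) : ℝ :=
  G (2 * j * L) ((2 * j + 1) * L) p.1 p.2

variable {L : ℝ}

theorem mul_half_le_axisDist_of_mem_Icc (hL : 0 < L) {R : ℝ} {j : ℤ} (hj : 2 * R ≤ |(j : ℝ)| * L)
    {ρ z x : ℝ} (hz : |z| ≤ R) (hx : x ∈ Set.Icc (z - (2 * j + 1) * L) (z - 2 * j * L)) :
    |(j : ℝ)| * L / 2 ≤ axisDist ρ x := by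
  refine le_trans ?_ (abs_le_axisDist ρ x)
  obtain ⟨hzl, hzr⟩ := abs_le.1 hz
  rcases le_or_gt 0 j with hj0 | hj0
  · have hj0' : (0 : ℝ) ≤ j := mod_cast hj0
    rw [abs_of_nonneg hj0'] at hj ⊢
    linarith [hx.2, neg_le_abs x, mul_nonneg hj0' hL.le]
  · have hj0' : (j : ℝ) + 1 ≤ 0 := mod_cast hj0
    rw [abs_of_neg (by linarith)] at hj ⊢
    linarith [hx.1, le_abs_self x, mul_nonpos_of_nonpos_of_nonneg hj0' hL.le]

theorem eventually_cofinite_le_abs_mul (hL : 0 < L) (R : ℝ) :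
    ∀ᶠ j : ℤ in cofinite, R ≤ |(j : ℝ)| * L :=
  ((tendsto_norm_cocompact_atTop.comp Int.tendsto_coe_cofinite).atTop_mul_const
    hL).eventually_ge_atTop R

theorem summableLocallyUniformlyOn_onSegment (hL : 0 < L) {G : ℝ → ℝ → ℝ → ℝ → ℝ} {C : ℝ → ℝ}
    (hC : Monotone C)
    (hG : ∀ a b ρ z m, b - a = L → 0 < ρ → 0 < m →
      (∀ x ∈ Set.Icc (z - b) (z - a), m ≤ axisDist ρ x) → |G a b ρ z| ≤ C ρ / m ^ 2) :
    SummableLocallyUniformlyOn (onSegment L G) halfPlane := by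
  refine summableLocallyUniformlyOn_of_eventually_norm_le_div_sq isOpen_halfPlane
    fun K hKs hK => ?_
  obtain ⟨R, hR⟩ := exists_forall_norm_fst_snd_le_of_isBounded hK.isBounded
  refine ⟨C R / (L / 2) ^ 2, ?_⟩
  filter_upwards [eventually_cofinite_le_abs_mul hL (2 * R), eventually_cofinite_ne 0]
    with j hj hj0 p hp
  have : 0 < |(j : ℝ)| := abs_pos.2 (mod_cast hj0)
  have hle := hG (2 * j * L) ((2 * j + 1) * L) p.1 p.2 (|(j : ℝ)| * L / 2) (by ring) (hKs hp)
    (by positivity) fun x hx => mul_half_le_axisDist_of_mem_Icc hL hj (hR p hp).2 hx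
  calc |onSegment L G j p| ≤ C p.1 / (|(j : ℝ)| * L / 2) ^ 2 := hle
    _ ≤ C R / (|(j : ℝ)| * L / 2) ^ 2 := by
        gcongr
        exact hC ((le_abs_self _).trans (hR p hp).1)
    _ = C R / (L / 2) ^ 2 / (j : ℝ) ^ 2 := by
        rw [mul_div_assoc, mul_pow, sq_abs, div_div, mul_comm]

theorem summableLocallyUniformlyOn_intervalRadialDeriv (hL : 0 < L) :
    SummableLocallyUniformlyOn (onSegment L intervalRadialDeriv) halfPlane :=
  summableLocallyUniformlyOn_onSegment hL (C := fun _ => L) monotone_const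
    fun _ _ _ _ _ hab hρ hm hdist =>
      hab ▸ abs_intervalRadialDeriv_le (sub_nonneg.1 (hab ▸ hL.le)) hρ hm hdist

theorem summableLocallyUniformlyOn_intervalAxialDeriv (hL : 0 < L) :
    SummableLocallyUniformlyOn (onSegment L intervalAxialDeriv) halfPlane :=
  summableLocallyUniformlyOn_onSegment hL (C := fun _ => L) monotone_const
    fun _ _ _ _ _ hab hρ hm hdist =>
      hab ▸ abs_intervalAxialDeriv_le (sub_nonneg.1 (hab ▸ hL.le)) hρ hm hdist

theorem summableLocallyUniformlyOn_intervalAxialDerivTwo (hL : 0 < L) :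
    SummableLocallyUniformlyOn (onSegment L intervalAxialDerivTwo) halfPlane :=
  summableLocallyUniformlyOn_onSegment hL (C := fun _ => 2) monotone_const
    fun _ _ _ _ _ hab hρ hm hdist =>
      abs_intervalAxialDerivTwo_le (sub_nonneg.1 (hab ▸ hL.le)) hρ hm hdist

theorem summableLocallyUniformlyOn_neg_mul_intervalAxialDerivTwo (hL : 0 < L) :
    SummableLocallyUniformlyOn
      (fun j p => -(p.1 * onSegment L intervalAxialDerivTwo j p)) halfPlane := by
  refine summableLocallyUniformlyOn_onSegment hL
    (G := fun a b ρ z => -(ρ * intervalAxialDerivTwo a b ρ z)) (C := fun ρ => ρ * 2)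
    (monotone_id.mul_const zero_le_two) fun a b ρ z m hab hρ hm hdist => ?_
  rw [abs_neg, abs_mul, abs_of_pos hρ, mul_div_assoc]
  gcongr
  exact abs_intervalAxialDerivTwo_le (sub_nonneg.1 (hab ▸ hL.le)) hρ hm hdist

/-- The potential of the segment `Γ_{2j}` plus `1 / (2|j|)`, which cancels its decay as
`|j| → ∞`. For `j = 0` the added constant is `1 / 0 = 0`. -/
noncomputable def renormalizedPotential (L : ℝ) (j : ℤ) (p : ℝ × ℝ) : ℝ :=
  onSegment L intervalPotential j p + 1 / (2 * |(j : ℝ)|)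

/-- The limit of the renormalized sums `∑_{|j| ≤ n} U_{Γ_{2j}} + log n`. -/
noncomputable def solitonPotential (L : ℝ) (p : ℝ × ℝ) : ℝ :=
  ∑' j, renormalizedPotential L j p - Real.eulerMascheroniConstant

theorem summableLocallyUniformlyOn_renormalizedPotential (hL : 0 < L) :
    SummableLocallyUniformlyOn (renormalizedPotential L) halfPlane := by
  refine summableLocallyUniformlyOn_of_eventually_norm_le_div_sq isOpen_halfPlane
    fun K hKs hK => ?_
  obtain ⟨R, hR⟩ := exists_forall_norm_fst_snd_le_of_isBounded hK.isBounded
  refine ⟨(R + R + L) / L, ?_⟩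
  filter_upwards [eventually_cofinite_le_abs_mul hL (2 * R), eventually_cofinite_ne 0]
    with j hj hj0 p hp
  have : 0 < |(j : ℝ)| := abs_pos.2 (mod_cast hj0)
  have hab : (2 * (j : ℝ) + 1) * L - 2 * j * L = L := by ring
  have ha : |2 * (j : ℝ) * L| = 2 * |(j : ℝ)| * L := by
    rw [abs_mul, abs_mul, abs_two, abs_of_pos hL]
  have hle := abs_intervalPotential_add_le (a := 2 * j * L) (b := (2 * j + 1) * L) (z := p.2)
    (by linarith) (abs_pos.1 (by rw [ha]; positivity)) (hKs hp)
    (m := |(j : ℝ)| * L / 2) (by positivity)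
    fun x hx => mul_half_le_axisDist_of_mem_Icc hL hj (hR p hp).2 hx
  rw [hab, ha] at hle
  calc |renormalizedPotential L j p|
      = |intervalPotential (2 * j * L) ((2 * j + 1) * L) p.1 p.2 + L / (2 * |(j : ℝ)| * L)| := by
        rw [renormalizedPotential, onSegment, div_mul_cancel_right₀ hL.ne', one_div]
    _ ≤ (p.1 + |p.2| + L) / (|(j : ℝ)| * L / 2 * (2 * |(j : ℝ)| * L)) * L := hle
    _ ≤ (R + R + L) / (|(j : ℝ)| * L / 2 * (2 * |(j : ℝ)| * L)) * L := by
        gcongr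
        exacts [(le_abs_self _).trans (hR p hp).1, (hR p hp).2]
    _ = (R + R + L) / L / (j : ℝ) ^ 2 := by
        rw [← sq_abs (j : ℝ)]
        field_simp

theorem tendstoLocallyUniformlyOn_solitonPotential (hL : 0 < L) :
    TendstoLocallyUniformlyOn
      (fun (n : ℕ) p => ∑ j ∈ Finset.Icc (-(n : ℤ)) n, onSegment L intervalPotential j p
        + Real.log n)
      (solitonPotential L) atTop halfPlane := by
  have hsum : TendstoLocallyUniformlyOn
      (fun (n : ℕ) p => ∑ j ∈ Finset.Icc (-(n : ℤ)) n, renormalizedPotential L j p)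
      (fun p => ∑' j, renormalizedPotential L j p) atTop halfPlane := fun v hv p hp =>
    let ⟨t, ht, h⟩ :=
      (summableLocallyUniformlyOn_renormalizedPotential hL).hasSumLocallyUniformlyOn v hv p hp
    ⟨t, ht, Finset.tendsto_Icc_neg.eventually h⟩
  have hconst := (Real.tendsto_harmonic_sub_log.tendstoUniformlyOn_const
    halfPlane).tendstoLocallyUniformlyOn
  refine (hsum.sub hconst).congr fun n p _ => ?_
  simp only [Pi.sub_apply, renormalizedPotential, Finset.sum_add_distrib,
    sum_Icc_one_div_two_mul_abs]
  ring

theorem isAxisymmetricHarmonic_solitonPotential (hL : 0 < L) :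
    IsAxisymmetricHarmonic (solitonPotential L) := by
  have hV := summableLocallyUniformlyOn_renormalizedPotential hL
  have hA := summableLocallyUniformlyOn_intervalRadialDeriv hL
  have hD := summableLocallyUniformlyOn_intervalAxialDeriv hL
  refine isAxisymmetricHarmonic_of_hasDerivAt
    (A := fun p => ∑' j, onSegment L intervalRadialDeriv j p)
    (D := fun p => ∑' j, onSegment L intervalAxialDeriv j p)
    (E := fun p => ∑' j, onSegment L intervalAxialDerivTwo j p)
    (fun ρ z hρ => ?_) (fun ρ z hρ => ?_) (fun ρ z hρ => ?_) ?_
  · exact (hasDerivAt_tsum_radial (fun _ _ z hρ =>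
      (hasDerivAt_intervalPotential_radial _ _ hρ z).add_const _)
      (fun _ hp => hV.summable hp) hA ρ z hρ).sub_const _
  · simpa only [tsum_mul_left, tsum_neg] using
      hasDerivAt_tsum_radial (g := fun j p => p.1 * onSegment L intervalRadialDeriv j p)
        (g' := fun j p => -(p.1 * onSegment L intervalAxialDerivTwo j p))
        (fun _ _ z hρ => hasDerivAt_mul_intervalRadialDeriv _ _ hρ z)
        (fun p hp => (hA.summable hp).mul_left p.1)
        (summableLocallyUniformlyOn_neg_mul_intervalAxialDerivTwo hL) ρ z hρ
  · exact (hasDerivAt_tsum_axial (fun _ _ z hρ =>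
      (hasDerivAt_intervalPotential_axial _ _ hρ z).add_const _)
      (fun _ hp => hV.summable hp) hD ρ z hρ).sub_const _
  · exact hasDerivAt_tsum_axial
      (fun _ _ z hρ => hasDerivAt_intervalAxialDeriv_axial _ _ hρ z)
      (fun _ hp => hD.summable hp) (summableLocallyUniformlyOn_intervalAxialDerivTwo hL)

end Soliton

/-- The renormalized soliton sums converge locally uniformly on the half-plane and the
limit satisfies the axisymmetric Laplace equation. -/
theorem soliton_potential_harmonic (L : ℝ) (hL : 0 < L) :
    ∃ u : ℝ × ℝ → ℝ,
      TendstoLocallyUniformlyOn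
        (fun (n : ℕ) (p : ℝ × ℝ) =>
          (∑ j ∈ Finset.Icc (-(n : ℤ)) (n : ℤ),
            intervalPotential (2 * (j : ℝ) * L) ((2 * (j : ℝ) + 1) * L) p.1 p.2)
            + Real.log n)
        u atTop {p : ℝ × ℝ | 0 < p.1} ∧
      ∀ p : ℝ × ℝ, 0 < p.1 →
        deriv (fun s => deriv (fun s' => u (s', p.2)) s) p.1
          + p.1⁻¹ * deriv (fun s => u (s, p.2)) p.1
          + deriv (fun t => deriv (fun t' => u (p.1, t')) t) p.2 = 0 :=
  ⟨solitonPotential L, tendstoLocallyUniformlyOn_solitonPotential hL,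
    isAxisymmetricHarmonic_solitonPotential hL⟩
end
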